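/- arXiv:2112.15101 — 2 statements merged into one kernel-verified Lean document; each statement's English description precedes it below -/
import Mathlib

section
/- Let m ≥ 1 be an integer. There is a constant C, depending only on m, such that for every convex tree 𝒯 of dyadic cubes in ℝ^m one has ∑_{k∈ℤ} 2^{mk} · #(∂T_k ∩ (2^k ℤ)^m) ≤ C |Q_𝒯|, where T_k := ∪{Q ∈ 𝒯 : ℓ(Q) = 2^k}, ∂T_k is the topological boundary of T_k in ℝ^m, and #(∂T_k ∩ (2^k ℤ)^m) is the number of lattice points of (2^k ℤ)^m lying on ∂T_k. -/
open MeasureTheory Matrix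
open scoped ENNReal NNReal BigOperators

noncomputable section

namespace SBL

/-- The set of corners of the `m`-dimensional cube: functions `{1,…,m} → {0,1}`. -/
abbrev Corner (m : ℕ) := Fin m → Fin 2

/-- Index type for `ℝ^{2m}`: coordinates `x^0_i` (left) and `x^1_i` (right). -/
abbrev Idx (m : ℕ) := Fin m ⊕ Fin m

/-- The coordinate of `ℝ^{2m}` selected by the corner `j` at position `i`. -/
def sel {m : ℕ} (j : Corner m) (i : Fin m) : Idx m :=
  if j i = 0 then Sum.inl i else Sum.inr i

/-- The projection `Π_j : ℝ^{2m} → ℝ^m`, `Π_j x = (x_1^{j(1)},…,x_m^{j(m)})`. -/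
def proj {m : ℕ} (j : Corner m) (x : Idx m → ℝ) : Fin m → ℝ := fun i => x (sel j i)

/-- The projection `Π_j` as an `m × 2m` matrix. -/
def projM {m : ℕ} (j : Corner m) : Matrix (Fin m) (Idx m) ℝ :=
  Matrix.of fun i k => if k = sel j i then 1 else 0

/-- `A_j := Π_j J`, the `m × m` matrix obtained by applying `Π_j` to (the columns of) a
`2m × m` matrix `J`, i.e. selecting rows of `J` according to the corner `j`. -/
def Amat {m : ℕ} (J : Matrix (Idx m) (Fin m) ℝ) (j : Corner m) : Matrix (Fin m) (Fin m) ℝ :=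
  Matrix.of fun i k => J (sel j i) k

/-- Euclidean norm on a finite pi type. -/
def en {ι : Type*} [Fintype ι] (x : ι → ℝ) : ℝ := Real.sqrt (∑ i, (x i) ^ 2)

/-- Operator norm of a matrix with respect to the Euclidean norms. -/
def opNorm {ι κ : Type*} [Fintype ι] [Fintype κ] [DecidableEq κ] (A : Matrix ι κ ℝ) : ℝ :=
  ‖LinearMap.toContinuousLinearMap (Matrix.toEuclideanLin A)‖

/-- `Δ`-regularity of a square matrix: `max(‖A‖, |det A|⁻¹) ≤ Δ` (in particular `det A ≠ 0`). -/
def IsReg {m : ℕ} (Δ : ℝ) (A : Matrix (Fin m) (Fin m) ℝ) : Prop :=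
  opNorm A ≤ Δ ∧ A.det ≠ 0 ∧ |A.det|⁻¹ ≤ Δ

/-- A Calderón–Zygmund kernel of order `n` in `ℝ^m`, given by its multiplier `K̂` on
`ℝ^m ∖ {0}`: it is `n` times continuously differentiable there and satisfies the symbol
estimates `‖D^k K̂(η)‖ ≤ |η|^{-k}` for all `k ≤ n`. -/
def IsCZ {m : ℕ} (n : ℕ) (Khat : (Fin m → ℝ) → ℂ) : Prop :=
  ContDiffOn ℝ n Khat {0}ᶜ ∧
  ∀ k : ℕ, k ≤ n → ∀ η : Fin m → ℝ, η ≠ 0 →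
    ‖iteratedFDerivWithin ℝ k Khat {0}ᶜ η‖ ≤ (en η) ^ (-(k : ℝ))

/-- Fourier transform of a (nice) function on `ℝ^{2m}`. -/
def fourierT {m : ℕ} (φ : (Idx m → ℝ) → ℝ) (ξ : Idx m → ℝ) : ℂ :=
  ∫ x : Idx m → ℝ, Complex.exp (-2 * Real.pi * Complex.I * (∑ k, x k * ξ k)) * (φ x : ℂ)

/-- The principal value `p.v. ∫_{ℝ^{2m}} (∏_j F_j(Π_j x)) K(Πx) dx`, defined as
`∫_{ℝ^m} φ̂(−Π^T η) K̂(η) dη` with `φ = ∏_j F_j ∘ Π_j`. -/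
def pv {m : ℕ} (P : Matrix (Fin m) (Idx m) ℝ) (Khat : (Fin m → ℝ) → ℂ)
    (F : Corner m → (Fin m → ℝ) → ℝ) : ℂ :=
  ∫ η : Fin m → ℝ, fourierT (fun x => ∏ j, F j (proj j x)) (-(P.transpose.mulVec η)) * Khat η

/-- Upper `m×m` block `J^0` of a `2m×m` matrix. -/
def Jb0 {m : ℕ} (J : Matrix (Idx m) (Fin m) ℝ) : Matrix (Fin m) (Fin m) ℝ :=
  J.submatrix Sum.inl id

/-- Lower `m×m` block `J^1` of a `2m×m` matrix. -/
def Jb1 {m : ℕ} (J : Matrix (Idx m) (Fin m) ℝ) : Matrix (Fin m) (Fin m) ℝ :=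
  J.submatrix Sum.inr id

/-- `Π^J := (I, −J^0 (J^1)⁻¹)`. -/
def PiJ {m : ℕ} (J : Matrix (Idx m) (Fin m) ℝ) : Matrix (Fin m) (Idx m) ℝ :=
  Matrix.fromCols 1 (-(Jb0 J * (Jb1 J)⁻¹))

/-- The dyadic cube with parameters `Q = (k, n)`: `∏_i [2^k n_i, 2^k (n_i+1))`. -/
def dC {m : ℕ} (Q : ℤ × (Fin m → ℤ)) : Set (Fin m → ℝ) :=
  {x | ∀ i, (2:ℝ)^Q.1 * (Q.2 i : ℝ) ≤ x i ∧ x i < (2:ℝ)^Q.1 * ((Q.2 i : ℝ) + 1)}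

/-- `Q*`: the cube with the same center as `Q` and three times the side length. -/
def dCstar {m : ℕ} (Q : ℤ × (Fin m → ℤ)) : Set (Fin m → ℝ) :=
  {x | ∀ i, (2:ℝ)^Q.1 * ((Q.2 i : ℝ) - 1) ≤ x i ∧ x i < (2:ℝ)^Q.1 * ((Q.2 i : ℝ) + 2)}

/-- A (1/2-)sparse collection of dyadic cubes. -/
def IsSparse {m : ℕ} (S : Set (ℤ × (Fin m → ℤ))) : Prop :=
  ∀ Q ∈ S,
    (∑' Q' : {q : ℤ × (Fin m → ℤ) // q ∈ S ∧ dC q ⊆ dC Q}, volume (dC Q'.val)) ≤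
      2 * volume (dC Q)

/-- The average `[F]_S := (|S|⁻¹ ∫_S |F|^{2^{m-1}})^{2^{1-m}}`. -/
def avg {m : ℕ} (S : Set (Fin m → ℝ)) (F : (Fin m → ℝ) → ℝ) : ℝ :=
  (((volume S).toReal)⁻¹ * ∫ x in S, |F x| ^ (2^(m-1) : ℕ)) ^ ((2:ℝ) ^ ((1:ℤ) - (m:ℤ)))

/-- The closed axis-parallel box `∏_i [a_i, b_i]`. -/
def box {m : ℕ} (a b : Fin m → ℝ) : Set (Fin m → ℝ) := {x | ∀ i, a i ≤ x i ∧ x i ≤ b i}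

/-- Reciprocal eccentricity `ε_R = (min_i |I_i|)/(max_i |I_i|)` of the box `∏_i [a_i,b_i]`. -/
def ecc {m : ℕ} (a b : Fin m → ℝ) : ℝ := (⨅ i, (b i - a i)) / (⨆ i, (b i - a i))

/-- Modified strong maximal function evaluated on a set `S`:
`sup { (ε_R^α)^{2^{1-m}} [F]_R : R ∈ ℛ, S ⊆ R }` (as an extended real). -/
def Mal {m : ℕ} (α : ℝ) (F : (Fin m → ℝ) → ℝ) (S : Set (Fin m → ℝ)) : ℝ≥0∞ :=
  ⨆ (a : Fin m → ℝ) (b : Fin m → ℝ) (_ : ∀ i, a i < b i) (_ : S ⊆ box a b),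
    ENNReal.ofReal ((ecc a b ^ α) ^ ((2:ℝ) ^ ((1:ℤ) - (m:ℤ))) * avg (box a b) F)

/-- `M_α(F)(A𝒯) := sup_{Q ∈ 𝒯} M_α(F)(AQ)`. -/
def MalTree {m : ℕ} (α : ℝ) (F : (Fin m → ℝ) → ℝ) (A : Matrix (Fin m) (Fin m) ℝ)
    (T : Set (ℤ × (Fin m → ℤ))) : ℝ≥0∞ :=
  ⨆ Q ∈ T, Mal α F (A.mulVec '' dC Q)

/-- A convex tree of dyadic cubes with top cube `Qt`. -/
def ConvexTree {m : ℕ} (T : Set (ℤ × (Fin m → ℤ))) (Qt : ℤ × (Fin m → ℤ)) : Prop :=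
  Qt ∈ T ∧ (∀ Q ∈ T, dC Q ⊆ dC Qt) ∧
  ∀ Q ∈ T, ∀ Q' : ℤ × (Fin m → ℤ), dC Q ⊆ dC Q' → dC Q' ⊆ dC Qt → Q' ∈ T

/-- The Gaussian `g(x) = e^{−π|x|²}` on `ℝ^{2m}`. -/
def gss {m : ℕ} (x : Idx m → ℝ) : ℝ := Real.exp (-Real.pi * ∑ k, (x k) ^ 2)

/-- The mixed partial derivative `∂^0_i ∂^1_i g`. -/
def ddg {m : ℕ} (i : Fin m) (x : Idx m → ℝ) : ℝ :=
  fderiv ℝ (fun y : Idx m → ℝ => fderiv ℝ gss y (Pi.single (Sum.inl i) (1:ℝ))) x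
    (Pi.single (Sum.inr i) (1:ℝ))

/-- Isotropic `L¹` dilation on `ℝ^{2m}`: `φ_t(x) = t^{-2m} φ(t⁻¹ x)`. -/
def dil {m : ℕ} (t : ℝ) (φ : (Idx m → ℝ) → ℝ) (x : Idx m → ℝ) : ℝ :=
  (t ^ (2*m))⁻¹ * φ (t⁻¹ • x)

/-- Matrix dilation: `φ_D(x) = (det D)⁻¹ φ(D⁻¹ x)`. -/
def dilM {m : ℕ} (D : Matrix (Idx m) (Idx m) ℝ) (φ : (Idx m → ℝ) → ℝ) (x : Idx m → ℝ) : ℝ :=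
  (D.det)⁻¹ * φ (D⁻¹.mulVec x)

/-- The region `Ω_𝒯 = ∪_{Q∈𝒯} Q × (ℓ(Q)/2, ℓ(Q))` in the upper half space. -/
def Omega {m : ℕ} (T : Set (ℤ × (Fin m → ℤ))) : Set ((Fin m → ℝ) × ℝ) :=
  ⋃ Q ∈ T, (dC Q) ×ˢ Set.Ioo ((2:ℝ)^Q.1 / 2) ((2:ℝ)^Q.1)

/-- The localized form `Λ_𝒯((F_j)_j)`. -/
def LambdaT {m : ℕ} (J : Matrix (Idx m) (Fin m) ℝ) (T : Set (ℤ × (Fin m → ℤ)))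
    (c : ℝ → ℂ) (u : Idx m → ℝ) (i : Fin m) (F : Corner m → (Fin m → ℝ) → ℝ) : ℂ :=
  ∫ z in Omega T, c z.2 * Complex.ofReal ((1 + en u ^ (4*m))⁻¹ * (z.2)⁻¹ *
    ∫ x : Idx m → ℝ, (∏ j, F j (proj j x)) * dil z.2 (ddg i) (x - J.mulVec z.1 + z.2 • u))

/-- `T_k := ∪ {Q ∈ 𝒯 : ℓ(Q) = 2^k}`. -/
def Tkset {m : ℕ} (T : Set (ℤ × (Fin m → ℤ))) (k : ℤ) : Set (Fin m → ℝ) :=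
  ⋃ Q ∈ {q ∈ T | q.1 = k}, dC Q

/-- The form `Λ̃_𝒯((F_j)_j)` with localization in the `x` variables. -/
def LambdaTilde {m : ℕ} (J : Matrix (Idx m) (Fin m) ℝ) (T : Set (ℤ × (Fin m → ℤ)))
    (c : ℝ → ℂ) (u : Idx m → ℝ) (i : Fin m) (F : Corner m → (Fin m → ℝ) → ℝ) : ℂ :=
  ∑' k : ℤ, ∫ t in Set.Ioc ((2:ℝ)^(k-1)) ((2:ℝ)^k),
    c t * Complex.ofReal ((1 + en u ^ (4*m))⁻¹ * t⁻¹ *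
      ∫ p : Fin m → ℝ, ∫ x : Idx m → ℝ,
        (∏ j, Set.indicator ((Amat J j).mulVec '' Tkset T k) (F j) (proj j x)) *
          dil t (ddg i) (x - J.mulVec p + t • u))

/-- The form `Λ(𝒯,J,K)((F_j)_j)` from the induction proposition. -/
def LambdaK {m : ℕ} (J : Matrix (Idx m) (Fin m) ℝ) (T : Set (ℤ × (Fin m → ℤ)))
    (K : ℝ → (Idx m → ℝ) → ℂ) (F : Corner m → (Fin m → ℝ) → ℝ) : ℂ :=
  ∑' k : ℤ, ∫ x : Idx m → ℝ,
    Complex.ofReal (∏ j, Set.indicator ((Amat J j).mulVec '' Tkset T k) (F j) (proj j x)) *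
      ∫ t in Set.Ioc ((2:ℝ)^(k-1)) ((2:ℝ)^k), K t x * (t : ℂ)⁻¹

/-- The reflected corner `i∗j`, differing from `j` exactly at position `i`. -/
def istar {m : ℕ} (i : Fin m) (j : Corner m) : Corner m :=
  fun k => if k = i then 1 - j i else j k

/-- The diagonal matrix `Θ̃` with entry 0 at positions `i ≤ l` and 1 at positions `i > l`
(1-based), i.e. 0 for `i < l` and 1 otherwise in 0-based indexing. -/
def Th {m : ℕ} (l : ℕ) : Matrix (Fin m) (Fin m) ℝ :=
  Matrix.diagonal fun i => if (i : ℕ) < l then 0 else 1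

/-- The block diagonal matrix `Θ = diag(Θ̃, Θ̃)`. -/
def ThB {m : ℕ} (l : ℕ) : Matrix (Idx m) (Idx m) ℝ :=
  Matrix.diagonal (Sum.elim (fun i : Fin m => if (i:ℕ) < l then (0:ℝ) else 1)
    (fun i : Fin m => if (i:ℕ) < l then (0:ℝ) else 1))

end SBL

namespace SBL

lemma dC_nonempty {m : ℕ} (Q : ℤ × (Fin m → ℤ)) : (dC Q).Nonempty := by
  refine ⟨fun i => (2:ℝ) ^ Q.1 * (Q.2 i : ℝ), fun i => ⟨le_rfl, ?_⟩⟩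
  have h : (0:ℝ) < (2:ℝ) ^ Q.1 := by positivity
  nlinarith

lemma dC_eq_pi {m : ℕ} (Q : ℤ × (Fin m → ℤ)) :
    dC Q = Set.univ.pi fun i => Set.Ico ((2:ℝ) ^ Q.1 * (Q.2 i : ℝ))
      ((2:ℝ) ^ Q.1 * ((Q.2 i : ℝ) + 1)) := by
  ext x; simp [dC, Set.mem_pi]

lemma measurableSet_dC {m : ℕ} (Q : ℤ × (Fin m → ℤ)) : MeasurableSet (dC Q) := by
  rw [dC_eq_pi]
  exact MeasurableSet.univ_pi fun i => measurableSet_Ico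

lemma volume_dC {m : ℕ} (Q : ℤ × (Fin m → ℤ)) :
    volume (dC Q) = (2:ℝ≥0∞) ^ ((m:ℤ) * Q.1) := by
  rw [dC_eq_pi, Real.volume_pi_Ico]
  have h : ∀ i, ENNReal.ofReal ((2:ℝ) ^ Q.1 * ((Q.2 i : ℝ) + 1) - (2:ℝ) ^ Q.1 * (Q.2 i : ℝ))
      = (2:ℝ≥0∞) ^ Q.1 := by
    intro i
    rw [show (2:ℝ) ^ Q.1 * ((Q.2 i : ℝ) + 1) - (2:ℝ) ^ Q.1 * (Q.2 i : ℝ) =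
        (((2:ℝ≥0) ^ Q.1 : ℝ≥0) : ℝ) by push_cast; ring,
      ENNReal.ofReal_coe_nnreal, ENNReal.coe_zpow two_ne_zero]
    simp
  simp only [h, Finset.prod_const, Finset.card_univ, Fintype.card_fin]
  have hc : ∀ a : ℤ, (2:ℝ≥0∞) ^ a = (((2:ℝ≥0) ^ a : ℝ≥0) : ℝ≥0∞) := fun a => by
    rw [ENNReal.coe_zpow two_ne_zero]; simp
  rw [hc, hc, ← ENNReal.coe_pow, mul_comm, _root_.zpow_mul, zpow_natCast]

/-- Whether a point of `dC (k, n)` lies in the coarser cube `dC (k + l, p)` depends only on the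
indices `n` and `p`. -/
lemma dC_mem_coarse_iff {m : ℕ} {k : ℤ} {l : ℕ} {n p : Fin m → ℤ} {x : Fin m → ℝ}
    (hx : x ∈ dC (k, n)) :
    x ∈ dC (k + l, p) ↔ ∀ i, 2 ^ l * p i ≤ n i ∧ n i + 1 ≤ 2 ^ l * (p i + 1) := by
  have h2 : (0:ℝ) < (2:ℝ) ^ k := by positivity
  have hz : (2:ℝ) ^ (k + (l:ℤ)) = (2:ℝ) ^ k * 2 ^ l := by
    rw [zpow_add₀ (by norm_num), zpow_natCast]
  refine forall_congr' fun i => ?_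
  obtain ⟨ha, hb⟩ := hx i
  simp only at ha hb
  simp only [hz, mul_assoc]
  constructor
  · rintro ⟨hc, hd⟩
    have h3 : (2:ℝ) ^ l * (p i : ℝ) < (n i : ℝ) + 1 :=
      lt_of_mul_lt_mul_left (hc.trans_lt hb) h2.le
    have h4 : (n i : ℝ) < (2:ℝ) ^ l * ((p i : ℝ) + 1) :=
      lt_of_mul_lt_mul_left (ha.trans_lt hd) h2.le
    have h3' : 2 ^ l * p i < n i + 1 := by exact_mod_cast h3
    have h4' : n i < 2 ^ l * (p i + 1) := by exact_mod_cast h4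
    omega
  · rintro ⟨hc, hd⟩
    have hc' : (2:ℝ) ^ l * (p i : ℝ) ≤ n i := by exact_mod_cast hc
    have hd' : (n i : ℝ) + 1 ≤ (2:ℝ) ^ l * ((p i : ℝ) + 1) := by exact_mod_cast hd
    exact ⟨(mul_le_mul_of_nonneg_left hc' h2.le).trans ha,
      hb.trans_le (mul_le_mul_of_nonneg_left hd' h2.le)⟩

lemma dC_subset_iff {m : ℕ} {k : ℤ} {l : ℕ} {n p : Fin m → ℤ} :
    dC (k, n) ⊆ dC (k + l, p) ↔ ∀ i, 2 ^ l * p i ≤ n i ∧ n i + 1 ≤ 2 ^ l * (p i + 1) := by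
  constructor
  · intro h
    obtain ⟨x, hx⟩ := dC_nonempty (k, n)
    exact (dC_mem_coarse_iff hx).1 (h hx)
  · intro h x hx
    exact (dC_mem_coarse_iff hx).2 h

lemma dC_subset_or_disjoint {m : ℕ} {P Q : ℤ × (Fin m → ℤ)} (h : P.1 ≤ Q.1) :
    dC P ⊆ dC Q ∨ Disjoint (dC P) (dC Q) := by
  obtain ⟨k, n⟩ := P
  obtain ⟨j, p⟩ := Q
  obtain ⟨l, rfl⟩ := Int.le.dest h
  by_cases hd : Disjoint (dC (k, n)) (dC (k + (l:ℤ), p))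
  · exact Or.inr hd
  · obtain ⟨x, hx, hx'⟩ := Set.not_disjoint_iff.1 hd
    exact Or.inl (dC_subset_iff.2 ((dC_mem_coarse_iff hx).1 hx'))

lemma scale_le_of_dC_subset {m : ℕ} (hm : 1 ≤ m) {P Q : ℤ × (Fin m → ℤ)} (h : dC P ⊆ dC Q) :
    P.1 ≤ Q.1 := by
  have hv := measure_mono (μ := volume) h
  rw [volume_dC, volume_dC] at hv
  by_contra! hlt
  have h1 : (m:ℤ) * Q.1 < (m:ℤ) * P.1 := by
    apply mul_lt_mul_of_pos_left hlt
    exact_mod_cast hm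
  obtain ⟨a, ha⟩ := Int.le.dest h1.le
  have : (2:ℝ≥0∞) ^ ((m:ℤ) * Q.1) < (2:ℝ≥0∞) ^ ((m:ℤ) * P.1) := by
    rw [← ha, ENNReal.zpow_add (by simp) (by simp), zpow_natCast]
    conv_lhs => rw [← mul_one ((2:ℝ≥0∞) ^ ((m:ℤ) * Q.1))]
    refine ENNReal.mul_lt_mul_right (ENNReal.zpow_pos (by simp) (by simp) _).ne'
      (ENNReal.zpow_ne_top (by simp) (by simp) _) ?_
    exact one_lt_pow₀ (by norm_num) (by omega)
  exact absurd hv (not_le.2 this)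

lemma eq_of_dC_subset_of_scale_eq {m : ℕ} {P Q : ℤ × (Fin m → ℤ)} (h : dC P ⊆ dC Q)
    (hs : P.1 = Q.1) : P = Q := by
  obtain ⟨k, n⟩ := P
  obtain ⟨j, p⟩ := Q
  obtain rfl : k = j := hs
  have h' : dC (k, n) ⊆ dC (k + ((0:ℕ):ℤ), p) := by simpa using h
  have := dC_subset_iff.1 h'
  refine Prod.ext rfl (funext fun i => ?_)
  have := this i
  simp only [pow_zero, one_mul] at this
  simp only
  omega

/-- The indices `z` of the lattice points `2 ^ k z` on the boundary of the cube `P`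
(empty when `k` exceeds the scale of `P`). -/
def boundaryIdx {m : ℕ} (k : ℤ) (P : ℤ × (Fin m → ℤ)) : Set (Fin m → ℤ) :=
  {z | ∃ l : ℕ, k + l = P.1 ∧ (∀ i, 2 ^ l * P.2 i ≤ z i ∧ z i ≤ 2 ^ l * (P.2 i + 1)) ∧
    ∃ i, z i = 2 ^ l * P.2 i ∨ z i = 2 ^ l * (P.2 i + 1)}

lemma mem_boundaryIdx_of_subset_of_not_subset {m : ℕ} (hm : 1 ≤ m) {k : ℤ}
    {P : ℤ × (Fin m → ℤ)} {n n' z : Fin m → ℤ}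
    (hn : ∀ i, n i ≤ z i ∧ z i ≤ n i + 1) (hn' : ∀ i, n' i ≤ z i ∧ z i ≤ n' i + 1)
    (h : dC (k, n) ⊆ dC P) (h' : ¬ dC (k, n') ⊆ dC P) : z ∈ boundaryIdx k P := by
  obtain ⟨j, p⟩ := P
  obtain ⟨l, rfl⟩ := Int.le.dest (scale_le_of_dC_subset hm h)
  rw [dC_subset_iff] at h h'
  push Not at h'
  obtain ⟨i, hi⟩ := h'
  refine ⟨l, rfl, fun i => ?_, i, ?_⟩
  · have := h i; have := hn i
    simp only
    omega
  · have h1 := h i; have h2 := hn i; have h3 := hn' i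
    simp only
    by_cases hc : 2 ^ l * p i ≤ n' i
    · have := hi hc
      omega
    · omega

lemma encard_boundaryIdx_le {m : ℕ} (k : ℤ) (l : ℕ) (p : Fin m → ℤ) :
    (boundaryIdx k (k + l, p)).encard ≤ ((2 * m * (2 ^ l + 1) ^ (m - 1) : ℕ) : ℕ∞) := by
  classical
  set F : Fin m × Bool → Finset (Fin m → ℤ) := fun q =>
    Fintype.piFinset (Function.update (fun i => Finset.Icc (2 ^ l * p i) (2 ^ l * (p i + 1))) q.1
      {if q.2 then 2 ^ l * p q.1 else 2 ^ l * (p q.1 + 1)}) with hF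
  have hsub : boundaryIdx k (k + l, p) ⊆ ((Finset.univ.biUnion F : Finset _) : Set _) := by
    rintro z ⟨l', hl', hz, i, hi⟩
    obtain rfl : l' = l := by simpa using hl'
    simp only [Finset.coe_biUnion, Set.mem_iUnion, Finset.coe_univ, Set.mem_univ, exists_prop,
      true_and, Finset.mem_coe, hF, Fintype.mem_piFinset]
    have key : ∀ b : Bool, z i = (if b then 2 ^ l' * p i else 2 ^ l' * (p i + 1)) →
        ∀ a, z a ∈ Function.update (fun i => Finset.Icc (2 ^ l' * p i) (2 ^ l' * (p i + 1))) i
          {if b then 2 ^ l' * p i else 2 ^ l' * (p i + 1)} a := by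
      intro b hb a
      by_cases ha : a = i
      · subst ha; simpa using hb
      · rw [Function.update_of_ne ha]
        exact Finset.mem_Icc.2 (hz a)
    rcases hi with hi | hi
    · exact ⟨(i, true), key true (by simpa using hi)⟩
    · exact ⟨(i, false), key false (by simpa using hi)⟩
  have hcard : ∀ q, (F q).card = (2 ^ l + 1) ^ (m - 1) := by
    intro q
    rw [hF, Fintype.card_piFinset, ← Finset.mul_prod_erase _ _ (Finset.mem_univ q.1),
      Function.update_self, Finset.card_singleton, one_mul]
    rw [Finset.prod_congr rfl (g := fun _ => 2 ^ l + 1)]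
    · simp [Finset.card_erase_of_mem]
    · intro a ha
      rw [Function.update_of_ne (Finset.ne_of_mem_erase ha), Int.card_Icc,
        show (2:ℤ) ^ l * (p a + 1) + 1 - 2 ^ l * p a = ((2 ^ l + 1 : ℕ) : ℤ) by push_cast; ring,
        Int.toNat_natCast]
  refine (Set.encard_le_encard hsub).trans ?_
  rw [Set.encard_coe_eq_coe_finsetCard]
  refine Nat.cast_le.2 (Finset.card_biUnion_le.trans (le_of_eq ?_))
  simp only [hcard, Finset.sum_const, Finset.card_univ, Fintype.card_prod, Fintype.card_fin,
    Fintype.card_bool, smul_eq_mul]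
  ring

lemma tsum_encard_boundaryIdx_le {m : ℕ} (hm : 1 ≤ m) (P : ℤ × (Fin m → ℤ)) :
    ∑' k : ℤ, (2:ℝ≥0∞) ^ ((m:ℤ) * k) * ((boundaryIdx k P).encard : ℝ≥0∞) ≤
      (2 * m * 2 ^ m : ℝ≥0) * volume (dC P) := by
  have hinj : Function.Injective fun l : ℕ => P.1 - (l:ℤ) := fun a b h => by
    simp only at h; omega
  rw [← hinj.tsum_eq]
  · have hterm : ∀ l : ℕ, (2:ℝ≥0∞) ^ ((m:ℤ) * (P.1 - (l:ℤ))) *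
        ((boundaryIdx (P.1 - (l:ℤ)) P).encard : ℝ≥0∞) ≤
        ((2 * m * 2 ^ (m - 1) : ℝ≥0∞) * (2:ℝ≥0∞) ^ ((m:ℤ) * P.1)) * (2⁻¹ : ℝ≥0∞) ^ l := by
      intro l
      have h1 := encard_boundaryIdx_le (P.1 - (l:ℤ)) l P.2
      rw [show ((P.1 - (l:ℤ) + (l:ℤ), P.2) : ℤ × (Fin m → ℤ)) = P by simp] at h1
      have h2 : 2 * m * (2 ^ l + 1) ^ (m - 1) ≤ 2 * m * (2 ^ (l + 1)) ^ (m - 1) := by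
        gcongr
        have := Nat.one_le_two_pow (n := l)
        rw [pow_succ]; omega
      have h3 : ((boundaryIdx (P.1 - (l:ℤ)) P).encard : ℝ≥0∞) ≤
          ((2 * m * (2 ^ (l + 1)) ^ (m - 1) : ℕ) : ℝ≥0∞) := by
        have := ENat.toENNReal_mono (h1.trans (Nat.cast_le.2 h2))
        simpa only [ENat.toENNReal_coe] using this
      refine (mul_le_mul_right h3 _).trans (le_of_eq ?_)
      have e1 : (2:ℝ≥0∞) ^ ((m:ℤ) * (P.1 - (l:ℤ))) =
          (2:ℝ≥0∞) ^ ((m:ℤ) * P.1) * (2⁻¹ : ℝ≥0∞) ^ (l * m) := by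
        rw [mul_sub, sub_eq_add_neg, ENNReal.zpow_add (by simp) (by simp), ENNReal.zpow_neg,
          ← ENNReal.inv_pow, ← zpow_natCast]
        push_cast
        rw [mul_comm (l:ℤ)]
      have e2 : ((2:ℝ≥0∞) ^ (l + 1)) ^ (m - 1) = 2 ^ (m - 1) * 2 ^ (l * (m - 1)) := by
        rw [← pow_mul, add_mul, one_mul, pow_add, mul_comm]
      have e3 : (2⁻¹ : ℝ≥0∞) ^ (l * m) * 2 ^ (l * (m - 1)) = 2⁻¹ ^ l := by
        obtain ⟨a, rfl⟩ : ∃ a, m = a + 1 := ⟨m - 1, by omega⟩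
        rw [Nat.add_sub_cancel, mul_add, mul_one, pow_add, mul_right_comm, ← mul_pow,
          ENNReal.inv_mul_cancel (by simp) (by simp), one_pow, one_mul]
      push_cast
      rw [e1, e2, ← e3]
      ring
    refine (ENNReal.tsum_le_tsum hterm).trans (le_of_eq ?_)
    rw [ENNReal.tsum_mul_left, ENNReal.tsum_geometric, ENNReal.one_sub_inv_two, inv_inv, volume_dC]
    obtain ⟨a, rfl⟩ : ∃ a, m = a + 1 := ⟨m - 1, by omega⟩
    push_cast
    rw [pow_succ]
    ring
  · intro k hk
    have hne : (boundaryIdx k P).Nonempty := by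
      rw [Set.nonempty_iff_ne_empty]
      rintro h
      simp [h] at hk
    obtain ⟨z, l, hl, -⟩ := hne
    exact ⟨l, by simp only; omega⟩

/-- A lattice point on the boundary of `T_k` touches a cube of `T` and a cube outside `T`. -/
lemma exists_adjacent_of_mem_frontier {m : ℕ} {T : Set (ℤ × (Fin m → ℤ))} {k : ℤ}
    {z : Fin m → ℤ} (hz : (fun i => (2:ℝ) ^ k * (z i : ℝ)) ∈ frontier (Tkset T k)) :
    (∃ n : Fin m → ℤ, (∀ i, n i ≤ z i ∧ z i ≤ n i + 1) ∧ (k, n) ∈ T) ∧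
    ∃ n : Fin m → ℤ, (∀ i, n i ≤ z i ∧ z i ≤ n i + 1) ∧ (k, n) ∉ T := by
  have h2 : (0:ℝ) < (2:ℝ) ^ k := by positivity
  set B : Set (Fin m → ℝ) := Set.univ.pi fun i =>
    Set.Ioo ((2:ℝ) ^ k * ((z i : ℝ) - 1)) ((2:ℝ) ^ k * ((z i : ℝ) + 1))
  have hBo : IsOpen B := isOpen_set_pi Set.finite_univ fun i _ => isOpen_Ioo
  have hzB : (fun i => (2:ℝ) ^ k * (z i : ℝ)) ∈ B := fun i _ =>
    ⟨by nlinarith, by nlinarith⟩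
  have hadj : ∀ x ∈ B, ∀ n, x ∈ dC (k, n) → ∀ i, n i ≤ z i ∧ z i ≤ n i + 1 := by
    intro x hx n hn i
    obtain ⟨ha, hb⟩ := hx i trivial
    obtain ⟨hc, hd⟩ := hn i
    have h3 : (n i : ℝ) < (z i : ℝ) + 1 := lt_of_mul_lt_mul_left (hc.trans_lt hb) h2.le
    have h4 : (z i : ℝ) - 1 < (n i : ℝ) + 1 := lt_of_mul_lt_mul_left (ha.trans hd) h2.le
    have h3' : n i < z i + 1 := by exact_mod_cast h3
    have h4' : z i - 1 < n i + 1 := by exact_mod_cast h4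
    omega
  constructor
  · obtain ⟨x, hxB, hxT⟩ := mem_closure_iff.1 hz.1 B hBo hzB
    simp only [Tkset, Set.mem_iUnion] at hxT
    obtain ⟨⟨k', n⟩, ⟨hQ, hk⟩, hx⟩ := hxT
    obtain rfl : k' = k := hk
    exact ⟨n, hadj x hxB n hx, hQ⟩
  · by_contra! hall
    refine hz.2 (mem_interior.2 ⟨B, fun x hx => ?_, hBo, hzB⟩)
    have hxd : x ∈ dC (k, fun i => ⌊x i / (2:ℝ) ^ k⌋) := by
      intro i
      have h3 := Int.floor_le (x i / (2:ℝ) ^ k)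
      have h4 := Int.lt_floor_add_one (x i / (2:ℝ) ^ k)
      rw [le_div_iff₀ h2] at h3
      rw [div_lt_iff₀ h2] at h4
      constructor
      · simpa [mul_comm] using h3
      · simpa [mul_comm] using h4
    simp only [Tkset, Set.mem_iUnion]
    exact ⟨_, ⟨hall _ (hadj x hx _ hxd), rfl⟩, hxd⟩

/-- The maximal dyadic subcubes of `Qt` that do not belong to `T`. -/
def stoppingCubes {m : ℕ} (T : Set (ℤ × (Fin m → ℤ))) (Qt : ℤ × (Fin m → ℤ)) :
    Set (ℤ × (Fin m → ℤ)) :=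
  {P | P ∉ T ∧ dC P ⊆ dC Qt ∧ ∀ P', P' ∉ T → dC P ⊆ dC P' → dC P' ⊆ dC Qt → P' = P}

lemma exists_stoppingCube {m : ℕ} (hm : 1 ≤ m) {T : Set (ℤ × (Fin m → ℤ))}
    {Qt Q : ℤ × (Fin m → ℤ)} (hQ : Q ∉ T) (hQt : dC Q ⊆ dC Qt) :
    ∃ P ∈ stoppingCubes T Qt, dC Q ⊆ dC P := by
  obtain ⟨j, ⟨p, hpT, hQp, hp⟩, hmax⟩ := Int.exists_greatest_of_bdd
    (P := fun j => ∃ p, (j, p) ∉ T ∧ dC Q ⊆ dC (j, p) ∧ dC (j, p) ⊆ dC Qt)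
    ⟨Qt.1, fun j ⟨p, _, _, h⟩ => scale_le_of_dC_subset hm h⟩ ⟨Q.1, Q.2, hQ, subset_rfl, hQt⟩
  refine ⟨(j, p), ⟨hpT, hp, fun P' hP' hsub hP't => ?_⟩, hQp⟩
  exact (eq_of_dC_subset_of_scale_eq hsub (le_antisymm (scale_le_of_dC_subset hm hsub)
    (hmax P'.1 ⟨P'.2, hP', hQp.trans hsub, hP't⟩))).symm

lemma tsum_volume_stoppingCubes_le {m : ℕ} (T : Set (ℤ × (Fin m → ℤ)))
    (Qt : ℤ × (Fin m → ℤ)) :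
    ∑' P : stoppingCubes T Qt, volume (dC P.1) ≤ volume (dC Qt) := by
  have hdisj : Pairwise (Function.onFun Disjoint fun P : stoppingCubes T Qt => dC P.1) := by
    have key : ∀ P R : stoppingCubes T Qt, P ≠ R → P.1.1 ≤ R.1.1 → Disjoint (dC P.1) (dC R.1) := by
      intro P R hne hle
      refine (dC_subset_or_disjoint hle).resolve_left fun hsub => hne ?_
      exact Subtype.ext (P.2.2.2 R.1 R.2.1 hsub R.2.2.1).symm
    intro P R hne
    rcases le_total P.1.1 R.1.1 with h | h
    · exact key P R hne h
    · exact (key R P hne.symm h).symm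
  rw [← measure_iUnion hdisj fun P => measurableSet_dC P.1]
  exact measure_mono (Set.iUnion_subset fun P => P.2.2.1)

lemma mem_boundaryIdx_of_mem_frontier {m : ℕ} (hm : 1 ≤ m) {T : Set (ℤ × (Fin m → ℤ))}
    {Qt : ℤ × (Fin m → ℤ)} (hT : ConvexTree T Qt) {k : ℤ} {z : Fin m → ℤ}
    (hz : (fun i => (2:ℝ) ^ k * (z i : ℝ)) ∈ frontier (Tkset T k)) :
    z ∈ boundaryIdx k Qt ∪ ⋃ P : stoppingCubes T Qt, boundaryIdx k P.1 := by
  obtain ⟨⟨n, hn, hnT⟩, n', hn', hnT'⟩ := exists_adjacent_of_mem_frontier hz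
  have hsub := hT.2.1 _ hnT
  by_cases h : dC (k, n') ⊆ dC Qt
  · obtain ⟨P, hP, hsub'⟩ := exists_stoppingCube hm hnT' h
    refine Or.inr (Set.mem_iUnion.2 ⟨⟨P, hP⟩, ?_⟩)
    exact mem_boundaryIdx_of_subset_of_not_subset hm hn' hn hsub' fun hc =>
      hP.1 (hT.2.2 _ hnT P hc hP.2.1)
  · exact Or.inl (mem_boundaryIdx_of_subset_of_not_subset hm hn hn' hsub h)

lemma encard_frontier_lattice_le {m : ℕ} (hm : 1 ≤ m) {T : Set (ℤ × (Fin m → ℤ))}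
    {Qt : ℤ × (Fin m → ℤ)} (hT : ConvexTree T Qt) (k : ℤ) :
    ((frontier (Tkset T k) ∩ {y : Fin m → ℝ | ∀ i, ∃ z : ℤ, y i = (2:ℝ) ^ k * z}).encard :
        ℝ≥0∞) ≤
      ((boundaryIdx k Qt).encard : ℝ≥0∞) +
        ∑' P : stoppingCubes T Qt, ((boundaryIdx k P.1).encard : ℝ≥0∞) := by
  have hsub : frontier (Tkset T k) ∩ {y : Fin m → ℝ | ∀ i, ∃ z : ℤ, y i = (2:ℝ) ^ k * z} ⊆
      (fun (z : Fin m → ℤ) i => (2:ℝ) ^ k * (z i : ℝ)) ''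
        (boundaryIdx k Qt ∪ ⋃ P : stoppingCubes T Qt, boundaryIdx k P.1) := by
    rintro y ⟨hy, hlat⟩
    choose z hz using hlat
    obtain rfl : y = fun i => (2:ℝ) ^ k * (z i : ℝ) := funext hz
    exact ⟨z, mem_boundaryIdx_of_mem_frontier hm hT hy, rfl⟩
  refine (ENat.toENNReal_mono ((Set.encard_le_encard hsub).trans
    ((Set.encard_image_le _ _).trans (Set.encard_union_le _ _)))).trans ?_
  rw [ENat.toENNReal_add]
  gcongr
  simp only [← ENNReal.tsum_set_one]
  exact ENNReal.tsum_iUnion_le_tsum (fun _ => (1:ℝ≥0∞)) _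

/-- Lemma (boundary counting for convex trees): the number of lattice points of `(2^k ℤ)^m`
on the topological boundary of `T_k`, counted as `∑' _ : ↥(·), 1` in `ℝ≥0∞`. -/
theorem statement10 (m : ℕ) (hm : 1 ≤ m) :
    ∃ C : ℝ≥0, ∀ (T : Set (ℤ × (Fin m → ℤ))) (Qt : ℤ × (Fin m → ℤ)), ConvexTree T Qt →
      (∑' k : ℤ, (2:ℝ≥0∞)^((m:ℤ)*k) *
        ∑' _ : ↥(frontier (Tkset T k) ∩ {y : Fin m → ℝ | ∀ i, ∃ z : ℤ, y i = (2:ℝ)^k * z}),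
          (1:ℝ≥0∞)) ≤
        C * volume (dC Qt) := by
  refine ⟨2 * (2 * m * 2 ^ m), fun T Qt hT => ?_⟩
  set C₀ : ℝ≥0 := 2 * m * 2 ^ m
  calc _ ≤ ∑' k : ℤ, ((2:ℝ≥0∞) ^ ((m:ℤ) * k) * ((boundaryIdx k Qt).encard : ℝ≥0∞) +
        ∑' P : stoppingCubes T Qt,
          (2:ℝ≥0∞) ^ ((m:ℤ) * k) * ((boundaryIdx k P.1).encard : ℝ≥0∞)) := by
        refine ENNReal.tsum_le_tsum fun k => ?_
        rw [ENNReal.tsum_set_one, ENNReal.tsum_mul_left, ← mul_add]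
        gcongr
        exact encard_frontier_lattice_le hm hT k
    _ = ∑' k : ℤ, (2:ℝ≥0∞) ^ ((m:ℤ) * k) * ((boundaryIdx k Qt).encard : ℝ≥0∞) +
        ∑' P : stoppingCubes T Qt, ∑' k : ℤ,
          (2:ℝ≥0∞) ^ ((m:ℤ) * k) * ((boundaryIdx k P.1).encard : ℝ≥0∞) := by
        rw [ENNReal.tsum_add, ENNReal.tsum_comm]
    _ ≤ C₀ * volume (dC Qt) + ∑' P : stoppingCubes T Qt, C₀ * volume (dC P.1) :=
        add_le_add (tsum_encard_boundaryIdx_le hm Qt)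
          (ENNReal.tsum_le_tsum fun P => tsum_encard_boundaryIdx_le hm P.1)
    _ ≤ C₀ * volume (dC Qt) + C₀ * volume (dC Qt) := by
        rw [ENNReal.tsum_mul_left]
        gcongr
        exact tsum_volume_stoppingCubes_le T Qt
    _ = _ := by
        push_cast
        ring

end SBL
end
end

section
/- Let m ≥ 2 be an integer and Δ > 1. There exists Δ' > 1, depending only on Δ and m, such that the following holds. Let Π be a real m×2m matrix such that Π_j Π^T is Δ-regular for every j ∈ 𝒞. Then the left and right m×m blocks P^0 and P^1 of Π = (P^0, P^1) are Δ-regular (in particular invertible), and, setting J to be the 2m×m matrix whose upper block is J^0 := (P^0)^{−1} and whose lower block is J^1 := −(P^1)^{−1}, the m×m matrices A_j := Π_j J are Δ'-regular for every j ∈ 𝒞. -/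
open MeasureTheory Matrix
open scoped ENNReal NNReal BigOperators

noncomputable section

namespace SBL

open scoped Matrix.Norms.L2Operator in
lemma opNorm_transpose {ι κ : Type*} [Fintype ι] [Fintype κ] [DecidableEq ι] [DecidableEq κ]
    (A : Matrix ι κ ℝ) : opNorm Aᵀ = opNorm A := by
  have h := Matrix.l2_opNorm_conjTranspose A
  rwa [Matrix.conjTranspose_eq_transpose_of_trivial, Matrix.l2_opNorm_def,
    Matrix.l2_opNorm_def] at h

lemma abs_entry_le_opNorm {ι κ : Type*} [Fintype ι] [Fintype κ] [DecidableEq κ]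
    (A : Matrix ι κ ℝ) (i : ι) (k : κ) : |A i k| ≤ opNorm A := by
  have h := (LinearMap.toContinuousLinearMap (Matrix.toEuclideanLin A)).le_opNorm
    (EuclideanSpace.single k 1)
  have h' := PiLp.norm_apply_le (p := 2)
    (LinearMap.toContinuousLinearMap (Matrix.toEuclideanLin A) (EuclideanSpace.single k 1)) i
  have e : (LinearMap.toContinuousLinearMap (Matrix.toEuclideanLin A)
      (EuclideanSpace.single k 1)) i = A i k := by
    simp [Matrix.toEuclideanLin, Matrix.toLin'_apply]
  rw [e, Real.norm_eq_abs] at h'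
  simpa [opNorm] using h'.trans h

lemma opNorm_le_card_mul {ι : Type*} [Fintype ι] [DecidableEq ι] (A : Matrix ι ι ℝ) {c : ℝ}
    (hc : 0 ≤ c) (hA : ∀ i k, |A i k| ≤ c) : opNorm A ≤ Fintype.card ι * c := by
  refine ContinuousLinearMap.opNorm_le_bound _ (by positivity) fun x => ?_
  refine abs_le_of_sq_le_sq' ?_ (by positivity) |>.2
  rw [mul_pow, EuclideanSpace.real_norm_sq_eq, EuclideanSpace.real_norm_sq_eq]
  have hrow (i : ι) : (LinearMap.toContinuousLinearMap (Matrix.toEuclideanLin A) x i) ^ 2 ≤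
      (Fintype.card ι * c ^ 2) * ∑ k, x k ^ 2 := by
    have e : LinearMap.toContinuousLinearMap (Matrix.toEuclideanLin A) x i =
        ∑ k, A i k * x k := rfl
    rw [e]
    refine (Finset.sum_mul_sq_le_sq_mul_sq _ _ _).trans ?_
    refine mul_le_mul_of_nonneg_right ?_ (Finset.sum_nonneg fun k _ => sq_nonneg _)
    refine (Finset.sum_le_card_nsmul _ _ (c ^ 2) fun k _ => ?_).trans_eq (by simp)
    exact sq_le_sq.2 ((hA i k).trans (le_abs_self c))
  refine (Finset.sum_le_card_nsmul _ _ _ fun i _ => hrow i).trans_eq ?_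
  simp only [Finset.card_univ, nsmul_eq_mul]
  ring

lemma abs_det_le {m : ℕ} {A : Matrix (Fin m) (Fin m) ℝ} {c : ℝ} (hA : ∀ i k, |A i k| ≤ c) :
    |A.det| ≤ m.factorial * c ^ m := by
  simpa using Matrix.det_le (abv := AbsoluteValue.abs) hA

lemma abs_inv_entry_le {m : ℕ} {Δ : ℝ} (hΔ : 1 ≤ Δ) {A : Matrix (Fin m) (Fin m) ℝ}
    (hA : IsReg Δ A) (i k : Fin m) : |A⁻¹ i k| ≤ Δ * (m.factorial * Δ ^ m) := by
  obtain ⟨hn, -, hinv⟩ := hA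
  rw [Matrix.inv_def, Matrix.smul_apply, Ring.inverse_eq_inv', smul_eq_mul, abs_mul, abs_inv,
    Matrix.adjugate_apply]
  refine mul_le_mul hinv (abs_det_le fun a b => ?_) (abs_nonneg _) (by linarith)
  rw [Matrix.updateRow_apply]
  split_ifs
  · rw [Pi.single_apply]
    split_ifs <;> simp <;> linarith
  · exact (abs_entry_le_opNorm A a b).trans hn

lemma isReg_transpose {m : ℕ} {Δ : ℝ} {A : Matrix (Fin m) (Fin m) ℝ} :
    IsReg Δ Aᵀ ↔ IsReg Δ A := by
  simp only [IsReg, opNorm_transpose, Matrix.det_transpose]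

lemma projM_mul {m : ℕ} (j : Corner m) (M : Matrix (Idx m) (Fin m) ℝ) :
    projM j * M = Amat M j := by
  ext i k
  simp [projM, Amat, Matrix.mul_apply]

/-- The absolute determinant of the row selection from `(P₀⁻¹, -P₁⁻¹)` at the corner `j`, in terms
of the column selection from `(P₀, P₁)` at the opposite corner. -/
lemma abs_det_Amat_inv {m : ℕ} (P : Matrix (Fin m) (Idx m) ℝ)
    (h₀ : (P.submatrix id Sum.inl).det ≠ 0) (h₁ : (P.submatrix id Sum.inr).det ≠ 0)
    (j : Corner m) :
    |(Amat (Matrix.fromRows (P.submatrix id Sum.inl)⁻¹ (-(P.submatrix id Sum.inr)⁻¹)) j).det| =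
      |(Amat Pᵀ fun i => 1 - j i).det| /
        (|(P.submatrix id Sum.inl).det| * |(P.submatrix id Sum.inr).det|) := by
  set P₀ := P.submatrix id Sum.inl with hP₀
  set P₁ := P.submatrix id Sum.inr with hP₁
  set D : Matrix (Fin m) (Fin m) ℝ := Matrix.diagonal fun i => if j i = 0 then 1 else 0 with hD
  set S : Matrix (Fin m) (Fin m) ℝ := Matrix.diagonal fun i => if j i = 0 then 1 else -1 with hS
  set A := Amat (Matrix.fromRows P₀⁻¹ (-P₁⁻¹)) j with hA
  have hS1 : |S.det| = 1 := by
    rw [hS, Matrix.det_diagonal, Finset.abs_prod]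
    exact Finset.prod_eq_one fun i _ => by split_ifs <;> simp
  have hSA : S * A = (1 + D * (P₀⁻¹ * P₁ - 1)) * P₁⁻¹ := by
    have e : (1 + D * (P₀⁻¹ * P₁ - 1)) * P₁⁻¹ = P₁⁻¹ + D * P₀⁻¹ - D * P₁⁻¹ := by
      have := Matrix.mul_nonsing_inv P₁ h₁.isUnit
      rw [add_mul, mul_assoc, sub_mul, mul_assoc, this, mul_one, one_mul, mul_sub,
        add_sub_assoc]
    rw [e]
    ext i k
    by_cases h : j i = 0 <;> simp [hS, hA, hD, Amat, sel, h]
  have hB : (Amat Pᵀ fun i => 1 - j i)ᵀ = P₀ * (1 + (P₀⁻¹ * P₁ - 1) * D) := by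
    have e : P₀ * (1 + (P₀⁻¹ * P₁ - 1) * D) = P₀ + P₁ * D - P₀ * D := by
      have := Matrix.mul_nonsing_inv P₀ h₀.isUnit
      rw [mul_add, mul_one, ← mul_assoc, mul_sub, ← mul_assoc, this, one_mul, mul_one, sub_mul,
        add_sub_assoc]
    rw [e]
    ext i k
    have hk : j k = 0 ∨ j k = 1 := by omega
    rcases hk with h | h <;> simp [hD, hP₀, hP₁, Amat, sel, h]
  have hdA := congrArg (fun M => |M.det|) hSA
  have hdB := congrArg (fun M => |M.det|) hB
  simp only [Matrix.det_mul, abs_mul, hS1, one_mul, Matrix.det_transpose,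
    Matrix.det_nonsing_inv, Ring.inverse_eq_inv', abs_inv] at hdA hdB
  rw [hdA, hdB, Matrix.det_one_add_mul_comm]
  have h₀' := abs_ne_zero.2 h₀
  have h₁' := abs_ne_zero.2 h₁
  field_simp

/-- Reduction lemma from Section 2: regularity of the blocks of `Π` and of the
matrices `A_j = Π_j J` for `J = ((P^0)⁻¹, −(P^1)⁻¹)` stacked vertically. -/
theorem statement11 (m : ℕ) (hm : 2 ≤ m) (Δ : ℝ) (hΔ : 1 < Δ) :
    ∃ Δ' : ℝ, 1 < Δ' ∧ ∀ P : Matrix (Fin m) (Idx m) ℝ,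
      (∀ j : Corner m, IsReg Δ (projM j * P.transpose)) →
      IsReg Δ (P.submatrix id Sum.inl) ∧ IsReg Δ (P.submatrix id Sum.inr) ∧
      ∀ j : Corner m,
        IsReg Δ' (Amat (Matrix.fromRows (P.submatrix id Sum.inl)⁻¹
          (-(P.submatrix id Sum.inr)⁻¹)) j) := by
  set C : ℝ := m.factorial * Δ ^ m with hC
  have hC0 : 0 ≤ C := by positivity
  have hΔ0 : 0 ≤ Δ := by linarith
  have hCC : 0 ≤ Δ * (C * C) := by positivity
  have hmC : 0 ≤ m * (Δ * C) := by positivity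
  refine ⟨1 + m * (Δ * C) + Δ * (C * C) + Δ, by linarith, fun P hP => ?_⟩
  simp only [projM_mul] at hP
  have hP₀ : IsReg Δ (P.submatrix id Sum.inl) := isReg_transpose.1 (hP fun _ => 0)
  have hP₁ : IsReg Δ (P.submatrix id Sum.inr) := isReg_transpose.1 (hP fun _ => 1)
  refine ⟨hP₀, hP₁, fun j => ?_⟩
  have hdet := abs_det_Amat_inv P hP₀.2.1 hP₁.2.1 j
  have hB := hP fun i => 1 - j i
  have hpos₀ := abs_pos.2 hP₀.2.1
  have hpos₁ := abs_pos.2 hP₁.2.1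
  have hdet₀ := abs_det_le fun i k => (abs_entry_le_opNorm _ i k).trans hP₀.1
  have hdet₁ := abs_det_le fun i k => (abs_entry_le_opNorm _ i k).trans hP₁.1
  refine ⟨?_, ?_, ?_⟩
  · refine (opNorm_le_card_mul (c := Δ * C) _ (by positivity) fun i k => ?_).trans ?_
    · by_cases h : j i = 0
      · simpa [Amat, sel, h] using abs_inv_entry_le hΔ.le hP₀ i k
      · simpa [Amat, sel, h] using abs_inv_entry_le hΔ.le hP₁ i k
    · rw [Fintype.card_fin]
      linarith
  · rw [← abs_pos, hdet]
    exact div_pos (abs_pos.2 hB.2.1) (mul_pos hpos₀ hpos₁)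
  · rw [hdet, inv_div, div_eq_mul_inv, mul_comm]
    have h := mul_le_mul hB.2.2 (mul_le_mul hdet₀ hdet₁ hpos₁.le hC0) (by positivity) hΔ0
    linarith

end SBL
end
end
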